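/- arXiv:math/0511281 — 10 statements merged into one kernel-verified Lean document; each statement's English description precedes it below -/
import Mathlib

section
/- Let θ : [0,∞) → [0,∞) be differentiable with uniformly bounded derivative (there is K > 0 with |θ′(t)| ≤ K for all t ≥ 0). Let ε ∈ (0, 1/3) and suppose there are constants C₁, C₂ ≥ 0 and T > 0 such that for all t > T one has ∫₀ᵗ θ(τ)² dτ ≤ C₁ + C₂·t^ε·θ(t)^{1−ε}. Then there exists a sequence (tᵢ) with tᵢ → ∞ such that tᵢ^ε·θ(tᵢ)^{1−ε} → 0. -/
open MeasureTheory Filter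

/-- Gronwall-type lemma (Lemma 5.4 / L38.2): if `θ : [0,∞) → [0,∞)` has uniformly
bounded derivative and `∫₀ᵗ θ² ≤ C₁ + C₂ t^ε θ(t)^{1-ε}` for `t > T`, then there is a
sequence `tᵢ → ∞` with `tᵢ^ε θ(tᵢ)^{1-ε} → 0`. -/
theorem stmt0 (θ : ℝ → ℝ) (K : ℝ) (hK : 0 < K)
    (hθdiff : Differentiable ℝ θ)
    (hθnonneg : ∀ t, 0 ≤ t → 0 ≤ θ t)
    (hθderiv : ∀ t, 0 ≤ t → |deriv θ t| ≤ K)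
    (ε : ℝ) (hε0 : 0 < ε) (hε1 : ε < 1/3)
    (C₁ C₂ T : ℝ) (hC₁ : 0 ≤ C₁) (hC₂ : 0 ≤ C₂) (hT : 0 < T)
    (hint : ∀ t, T < t → (∫ τ in (0:ℝ)..t, (θ τ)^2) ≤ C₁ + C₂ * t ^ ε * θ t ^ (1 - ε)) :
    ∃ t : ℕ → ℝ, Tendsto t atTop atTop ∧
      Tendsto (fun i => (t i) ^ ε * θ (t i) ^ (1 - ε)) atTop (nhds 0) := by
  by_contra hcon
  have hδ : ∃ δ > 0, ∃ A : ℝ, ∀ t, A ≤ t → δ ≤ t ^ ε * θ t ^ (1 - ε) := by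
    by_contra hno
    push Not at hno
    have h1 : ∀ n : ℕ, ∃ t : ℝ, max (n:ℝ) 0 ≤ t ∧ t ^ ε * θ t ^ (1 - ε) < 1 / ((n:ℝ) + 1) :=
      fun n => hno (1 / ((n:ℝ) + 1)) (by positivity) (max (n:ℝ) 0)
    choose t ht1 ht2 using h1
    refine hcon ⟨t, ?_, ?_⟩
    · exact tendsto_atTop_mono (fun n => (le_max_left _ _).trans (ht1 n))
        tendsto_natCast_atTop_atTop
    · refine squeeze_zero (fun n => ?_) (fun n => (ht2 n).le)
        tendsto_one_div_add_atTop_nhds_zero_nat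
      have h0 : 0 ≤ t n := (le_max_right _ _).trans (ht1 n)
      exact mul_nonneg (Real.rpow_nonneg h0 _) (Real.rpow_nonneg (hθnonneg _ h0) _)
  obtain ⟨δ, hδ0, A₀, hA₀⟩ := hδ
  obtain ⟨A, hAA, hAT⟩ : ∃ A, A₀ ≤ A ∧ T + 1 ≤ A := ⟨max A₀ (T+1), le_max_left _ _, le_max_right _ _⟩
  have hcont : Continuous (fun τ => (θ τ)^2) := hθdiff.continuous.pow 2
  set G : ℝ → ℝ := fun t => 1 + ∫ τ in (0:ℝ)..t, (θ τ)^2 with hG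
  have hGd : ∀ t, HasDerivAt G ((θ t)^2) t := fun t =>
    (hcont.integral_hasStrictDerivAt 0 t).hasDerivAt.const_add 1
  have hGpos : ∀ t, 0 ≤ t → 0 < G t := by
    intro t ht
    have : 0 ≤ ∫ τ in (0:ℝ)..t, (θ τ)^2 :=
      intervalIntegral.integral_nonneg ht (fun u _ => sq_nonneg _)
    simp only [hG]; linarith
  set C : ℝ := (1 + C₁) / δ + C₂ with hC
  have hC0 : 0 < C := by positivity
  have hGle : ∀ t, A ≤ t → G t ≤ C * (t ^ ε * θ t ^ (1 - ε)) := by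
    intro t ht
    have h1 := hint t (by linarith)
    have h2 := hA₀ t (by linarith)
    have h3 : 1 + C₁ ≤ (1 + C₁) / δ * (t ^ ε * θ t ^ (1 - ε)) := by
      calc 1 + C₁ = (1 + C₁) / δ * δ := by field_simp
        _ ≤ _ := by gcongr
    simp only [hG, hC]
    nlinarith
  have he : 0 < 1 - ε := by linarith
  obtain ⟨p, hp⟩ : ∃ p : ℝ, p = 2 / (1 - ε) := ⟨_, rfl⟩
  have hpe : (1 - ε) * p = 2 := by rw [hp]; field_simp
  have hp1 : 1 < p := by rw [hp, lt_div_iff₀ he]; linarith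
  have hq1 : 0 < 1 - ε * p := by nlinarith
  have hkey : ∀ t, A ≤ t → C ^ (-p) * t ^ (-(ε * p)) ≤ G t ^ (-p) * (θ t)^2 := by
    intro t ht
    have ht0 : 0 < t := by linarith
    have hth := hθnonneg t ht0.le
    have hg := hGpos t ht0.le
    have h1 : G t ^ p ≤ C ^ p * (t ^ (ε * p) * (θ t)^2) := by
      calc G t ^ p ≤ (C * (t ^ ε * θ t ^ (1 - ε))) ^ p :=
            Real.rpow_le_rpow hg.le (hGle t ht) (by linarith)
        _ = _ := by
          rw [Real.mul_rpow hC0.le (by positivity), Real.mul_rpow (by positivity) (by positivity),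
            ← Real.rpow_mul ht0.le, ← Real.rpow_mul hth, hpe, Real.rpow_two]
    rw [Real.rpow_neg hC0.le, Real.rpow_neg ht0.le, Real.rpow_neg hg.le, ← mul_inv,
      inv_mul_eq_div, inv_le_iff_one_le_mul₀ (by positivity), div_mul_eq_mul_div,
      le_div_iff₀ (by positivity)]
    linarith
  obtain ⟨c, hc⟩ : ∃ c : ℝ, c = C ^ (-p) * (p - 1) / (1 - ε * p) := ⟨_, rfl⟩
  have hc0 : 0 < c := by
    rw [hc]
    have : 0 < p - 1 := by linarith
    positivity
  have hHd : ∀ t, A ≤ t → HasDerivAt (fun t => G t ^ (1 - p) + c * t ^ (1 - ε * p))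
      ((1 - p) * (G t ^ (-p) * (θ t)^2 - C ^ (-p) * t ^ (-(ε * p)))) t := by
    intro t ht
    have ht0 : 0 < t := by linarith
    have h1 := (hGd t).rpow_const (p := 1 - p) (Or.inl (hGpos t ht0.le).ne')
    have h2 := (Real.hasDerivAt_rpow_const (p := 1 - ε * p) (Or.inl ht0.ne')).const_mul c
    refine (h1.add h2).congr_deriv ?_
    have hcq : c * (1 - ε * p) = C ^ (-p) * (p - 1) := by
      rw [hc, div_mul_cancel₀ _ hq1.ne']
    rw [show 1 - p - 1 = -p by ring, show 1 - ε * p - 1 = -(ε * p) by ring, ← mul_assoc, hcq]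
    ring
  have hanti : AntitoneOn (fun t => G t ^ (1 - p) + c * t ^ (1 - ε * p)) (Set.Ici A) := by
    refine antitoneOn_of_deriv_nonpos (convex_Ici A)
      (fun t ht => (hHd t ht).continuousAt.continuousWithinAt)
      (fun t ht => (hHd t (interior_subset ht)).differentiableAt.differentiableWithinAt) ?_
    intro t ht
    have ht' : A ≤ t := interior_subset ht
    rw [(hHd t ht').deriv]
    exact mul_nonpos_of_nonpos_of_nonneg (by linarith) (by linarith [hkey t ht'])
  have htend : Tendsto (fun t : ℝ => c * t ^ (1 - ε * p)) atTop atTop :=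
    (tendsto_rpow_atTop hq1).const_mul_atTop hc0
  obtain ⟨t, ht1, ht2⟩ := ((htend.eventually_gt_atTop
    (G A ^ (1 - p) + c * A ^ (1 - ε * p))).and (eventually_ge_atTop A)).exists
  have h1 := hanti (Set.mem_Ici.2 le_rfl) (Set.mem_Ici.2 ht2) ht2
  have h2 : 0 < G t ^ (1 - p) := Real.rpow_pos_of_pos (hGpos t (by linarith)) _
  simp only at h1
  linarith
end

section
/- The rescaled trapping term for the potential has a negative limit at infinity: r³·(2V(r) + r⋆(r)·F(r)·(dV/dr)(r)) → −2M as r → ∞. (Here 2V + ρ⋆V′ is the trapping term, with V′ the derivative of V with respect to the tortoise coordinate; the limiting value −2M corrects a dropped factor of 2 in the paper's stated value −M.) -/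
open Filter

theorem aux_log (a M : ℝ) (hM : 0 < M) :
    Tendsto (fun r : ℝ => Real.log ((r - a)/M) * r⁻¹) atTop (nhds 0) := by
  have h1 : Tendsto (fun r : ℝ => (r - a)/M) atTop atTop :=
    (tendsto_atTop_add_const_right atTop (-a) tendsto_id).atTop_div_const hM
  have h2 : Tendsto (fun x : ℝ => Real.log x / x) atTop (nhds 0) :=
    Real.isLittleO_log_id_atTop.tendsto_div_nhds_zero
  have h3 := h2.comp h1
  have h4 : Tendsto (fun r : ℝ => (1 - a * r⁻¹) / M) atTop (nhds ((1 - a * 0) / M)) :=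
    ((tendsto_inv_atTop_zero.const_mul a).const_sub 1).div_const M
  have h5 := h3.mul h4
  rw [zero_mul] at h5
  refine h5.congr' ?_
  filter_upwards [eventually_gt_atTop 0, eventually_gt_atTop a] with r hr ha
  have : r - a ≠ 0 := ne_of_gt (sub_pos.2 ha)
  simp only [Function.comp]
  generalize Real.log ((r - a)/M) = y
  field_simp

/-- Subcritical Reissner–Nordström: the rescaled trapping term for the potential has
limit `−2M` at infinity: `r³·(2V(r) + r⋆(r)·F(r)·(dV/dr)(r)) → −2M` as `r → ∞`. -/
theorem stmt9 (M Q : ℝ) (hM : 0 < M) (hQ : Q^2 < M^2) (Cstar : ℝ)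
    (rp rm : ℝ) (hrp : rp = M + Real.sqrt (M^2 - Q^2)) (hrm : rm = M - Real.sqrt (M^2 - Q^2))
    (F V rstar PQ dVdr : ℝ → ℝ)
    (hF : ∀ r, F r = 1 - 2*M/r + Q^2/r^2)
    (hV : ∀ r, V r = r⁻¹ * F r * (2*M/r^2 - 2*Q^2/r^3))
    (hrstar : ∀ r, rstar r = r + rp^2/(rp - rm) * Real.log ((r - rp)/M)
        - rm^2/(rp - rm) * Real.log ((r - rm)/M) + Cstar)
    (hPQ : ∀ r, PQ r = 3*M*r^3 - 4*(Q^2 + 2*M^2)*r^2 + 15*M*Q^2*r - 6*Q^4)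
    (hdV : ∀ r, dVdr r = -2/r^7 * PQ r) :
    Tendsto (fun r => r^3 * (2 * V r + rstar r * F r * dVdr r)) atTop (nhds (-2*M)) := by
  have hu : Tendsto (fun r : ℝ => r⁻¹) atTop (nhds 0) := tendsto_inv_atTop_zero
  have hp := aux_log rp M hM
  have hm := aux_log rm M hM
  have hG : Continuous (fun x : ℝ × ℝ × ℝ =>
      2 * (1 - 2*M*x.1 + Q^2*x.1^2) * (2*M - 2*Q^2*x.1)
      + (1 + rp^2/(rp - rm) * x.2.1 - rm^2/(rp - rm) * x.2.2 + Cstar * x.1)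
        * (1 - 2*M*x.1 + Q^2*x.1^2)
        * (-2 * (3*M - 4*(Q^2 + 2*M^2)*x.1 + 15*M*Q^2*x.1^2 - 6*Q^4*x.1^3))) := by
    fun_prop
  have h := (hG.tendsto (0, 0, 0)).comp (hu.prodMk_nhds (hp.prodMk_nhds hm))
  have e : (-2*M : ℝ) = 2 * (1 - 2*M*0 + Q^2*0^2) * (2*M - 2*Q^2*0)
      + (1 + rp^2/(rp - rm) * 0 - rm^2/(rp - rm) * 0 + Cstar * 0)
        * (1 - 2*M*0 + Q^2*0^2)
        * (-2 * (3*M - 4*(Q^2 + 2*M^2)*0 + 15*M*Q^2*0^2 - 6*Q^4*0^3)) := by ring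
  rw [e]
  refine h.congr' ?_
  filter_upwards [eventually_gt_atTop 0] with r hr
  simp only [Function.comp, hV, hdV, hPQ, hrstar, hF]
  generalize Real.log ((r - rp)/M) = y
  generalize Real.log ((r - rm)/M) = z
  generalize rp^2/(rp - rm) = A
  generalize rm^2/(rp - rm) = B
  field_simp
end

section
/- In the subcritical case the trapping term for the potential is negative far from the photon sphere: there exists ρ₀ > 0 such that for every r > r₊ with |r⋆(r)| > ρ₀, one has 2V(r) + r⋆(r)·F(r)·(dV/dr)(r) < 0. -/
/-- Subcritical Reissner–Nordström: the trapping term for the potential is negative far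
from the photon sphere: there is `ρ₀ > 0` so that `2V + r⋆·F·(dV/dr) < 0` whenever
`r > r₊` and `|r⋆(r)| > ρ₀`. -/
theorem stmt10 (M Q : ℝ) (hM : 0 < M) (hQ : Q^2 < M^2) (Cstar : ℝ)
    (rp rm : ℝ) (hrp : rp = M + Real.sqrt (M^2 - Q^2)) (hrm : rm = M - Real.sqrt (M^2 - Q^2))
    (F V rstar PQ dVdr : ℝ → ℝ)
    (hF : ∀ r, F r = 1 - 2*M/r + Q^2/r^2)
    (hV : ∀ r, V r = r⁻¹ * F r * (2*M/r^2 - 2*Q^2/r^3))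
    (hrstar : ∀ r, rstar r = r + rp^2/(rp - rm) * Real.log ((r - rp)/M)
        - rm^2/(rp - rm) * Real.log ((r - rm)/M) + Cstar)
    (hPQ : ∀ r, PQ r = 3*M*r^3 - 4*(Q^2 + 2*M^2)*r^2 + 15*M*Q^2*r - 6*Q^4)
    (hdV : ∀ r, dVdr r = -2/r^7 * PQ r) :
    ∃ ρ₀ > 0, ∀ r, rp < r → ρ₀ < |rstar r| →
      2 * V r + rstar r * F r * dVdr r < 0 := by
  have hs : 0 < Real.sqrt (M^2 - Q^2) := Real.sqrt_pos.mpr (by linarith)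
  have hss : Real.sqrt (M^2 - Q^2) ^ 2 = M^2 - Q^2 := Real.sq_sqrt (by linarith)
  set s := Real.sqrt (M^2 - Q^2) with hsdef
  clear_value s
  have hQs : Q^2 = M^2 - s^2 := by linarith
  have hsM : s ≤ M := by nlinarith [sq_nonneg Q]
  have hrm0 : 0 ≤ rm := by rw [hrm]; linarith
  have hrp0 : 0 < rp := by rw [hrp]; linarith
  have hd : 0 < rp - rm := by rw [hrp, hrm]; linarith
  have hA : 0 < rp^2/(rp - rm) := by positivity
  have hB : 0 ≤ rm^2/(rp - rm) := by positivity
  set A := rp^2/(rp - rm) with hAdef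
  set B := rm^2/(rp - rm) with hBdef
  clear_value A B
  -- reduction
  have key : ∀ r, rp < r → (2*M*r - 2*Q^2) * r^3 + rstar r * (- PQ r) < 0 →
      2 * V r + rstar r * F r * dVdr r < 0 := by
    intro r hr hE
    have hr0 : 0 < r := hrp0.trans hr
    have hFpos : 0 < F r := by
      have h1 : F r = (r - rp) * (r - rm) / r^2 := by
        rw [hF, hrp, hrm, hQs]; field_simp; ring
      rw [h1]
      have : 0 < r - rp := by linarith
      have : 0 < r - rm := by linarith
      positivity
    have h2 : 2 * V r + rstar r * F r * dVdr r
        = 2 * F r / r^7 * ((2*M*r - 2*Q^2) * r^3 + rstar r * (- PQ r)) := by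
      rw [hV, hdV]; field_simp
    rw [h2]
    exact mul_neg_of_pos_of_neg (by positivity) hE
  -- near infinity
  have hinf : ∀ᶠ r in Filter.atTop, (2*M*r - 2*Q^2) * r^3 + rstar r * (- PQ r) < 0 := by
    have ht : Filter.Tendsto (fun r : ℝ => (r - rm)/M) Filter.atTop Filter.atTop :=
      (Filter.tendsto_atTop_add_const_right _ (-rm) Filter.tendsto_id).atTop_div_const hM
    have hlo := (Real.isLittleO_log_id_atTop.comp_tendsto ht).bound
      (c := M/(20*(B+1))) (by positivity)
    filter_upwards [hlo, Filter.eventually_ge_atTop (rp + M),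
      Filter.eventually_ge_atTop (48*M), Filter.eventually_ge_atTop (20*|Cstar|)]
      with r h1 h2 h3 h4
    have hr0 : 0 < r := by linarith
    simp only [Function.comp, id, Real.norm_eq_abs] at h1
    have hlp : 0 ≤ Real.log ((r - rp)/M) := by
      apply Real.log_nonneg
      rw [le_div_iff₀ hM]; linarith
    have hlm : B * Real.log ((r - rm)/M) ≤ r/20 := by
      have e0 : 0 ≤ (r - rm)/M := by
        apply div_nonneg _ hM.le; linarith
      rw [abs_of_nonneg e0] at h1
      have e1 := (le_abs_self _).trans h1
      have e2 : M/(20*(B+1)) * ((r - rm)/M) = (r-rm)/(20*(B+1)) := by field_simp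
      rw [e2] at e1
      calc B * Real.log ((r - rm)/M) ≤ B * ((r-rm)/(20*(B+1))) := by gcongr
        _ = (B/(B+1)) * ((r-rm)/20) := by field_simp
        _ ≤ 1 * ((r-rm)/20) := by
            apply mul_le_mul_of_nonneg_right
            · rw [div_le_one (by linarith)]; linarith
            · linarith
        _ ≤ r/20 := by linarith
    have hst : 9/10 * r ≤ rstar r := by
      rw [hrstar]
      have := mul_nonneg hA.le hlp
      have := neg_abs_le Cstar
      linarith
    have hP : 5/2 * M * r^3 ≤ PQ r := by
      rw [hPQ]
      have q0 := sq_nonneg Q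
      have a1 : 24*M^2*r^2 ≤ 1/2*M*r^3 := by
        have := mul_le_mul_of_nonneg_left h3 (by positivity : 0 ≤ M*r^2)
        nlinarith
      have a2 : 4*(Q^2+2*M^2)*r^2 ≤ 12*M^2*r^2 := by
        apply mul_le_mul_of_nonneg_right _ (sq_nonneg r); linarith
      have a3 : 6*Q^4 ≤ 6*M^4 := by nlinarith
      have a4 : M^2*M^2 ≤ M^2*r^2 := by
        apply mul_le_mul_of_nonneg_left _ (sq_nonneg M)
        nlinarith
      have a5 : 0 ≤ 15*M*Q^2*r := by positivity
      nlinarith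
    have hm : (9/10*r) * (5/2*M*r^3) ≤ rstar r * PQ r :=
      mul_le_mul hst hP (by positivity) (by nlinarith)
    have : 0 < M * r^4 := by positivity
    have : 0 ≤ Q^2 * r^3 := by positivity
    nlinarith
  -- near the horizon
  have hhor : ∀ᶠ r in nhdsWithin rp (Set.Ioi rp),
      (2*M*r - 2*Q^2) * r^3 + rstar r * (- PQ r) < 0 := by
    have hPrp : 0 < - PQ rp := by
      have h4 : Q^4 = (M^2 - s^2)^2 := by rw [← hQs]; ring
      have : - PQ rp = 2 * (M*s + s^2)^2 := by
        rw [hPQ, h4, hQs, hrp]; ring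
      rw [this]; positivity
    have hPc : Continuous (fun r => - PQ r) := by
      have : PQ = fun r => 3*M*r^3 - 4*(Q^2 + 2*M^2)*r^2 + 15*M*Q^2*r - 6*Q^4 := funext hPQ
      rw [this]; fun_prop
    have hPt : Filter.Tendsto (fun r => - PQ r) (nhdsWithin rp (Set.Ioi rp)) (nhds (- PQ rp)) :=
      hPc.continuousAt.tendsto.mono_left nhdsWithin_le_nhds
    have hpoly : Filter.Tendsto (fun r : ℝ => (2*M*r - 2*Q^2) * r^3)
        (nhdsWithin rp (Set.Ioi rp)) (nhds ((2*M*rp - 2*Q^2) * rp^3)) := by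
      have : Continuous (fun r : ℝ => (2*M*r - 2*Q^2) * r^3) := by fun_prop
      exact this.continuousAt.tendsto.mono_left nhdsWithin_le_nhds
    have hlog : Filter.Tendsto (fun r : ℝ => Real.log ((r - rp)/M))
        (nhdsWithin rp (Set.Ioi rp)) Filter.atBot := by
      refine Real.tendsto_log_nhdsGT_zero.comp ?_
      refine tendsto_nhdsWithin_iff.mpr ⟨?_, ?_⟩
      · have : Continuous (fun r : ℝ => (r - rp)/M) := by fun_prop
        have h := this.continuousAt (x := rp)
        have h := h.tendsto.mono_left (nhdsWithin_le_nhds (s := Set.Ioi rp))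
        simpa using h
      · filter_upwards [self_mem_nhdsWithin] with r hr
        exact div_pos (sub_pos.mpr hr) hM
    have hrest : Filter.Tendsto (fun r : ℝ => r - B * Real.log ((r - rm)/M) + Cstar)
        (nhdsWithin rp (Set.Ioi rp)) (nhds (rp - B * Real.log ((rp - rm)/M) + Cstar)) := by
      have : ContinuousAt (fun r : ℝ => r - B * Real.log ((r - rm)/M) + Cstar) rp := by
        have h0 : (rp - rm)/M ≠ 0 := by positivity
        fun_prop (disch := assumption)
      exact this.tendsto.mono_left nhdsWithin_le_nhds
    have hrs : Filter.Tendsto rstar (nhdsWithin rp (Set.Ioi rp)) Filter.atBot := by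
      have := hrest.add_atBot (hlog.const_mul_atBot hA)
      refine this.congr (fun r => ?_)
      rw [hrstar]; ring
    exact (hpoly.add_atBot (hrs.atBot_mul_pos hPrp hPt)).eventually_lt_atBot 0
  obtain ⟨b, hb⟩ := Filter.eventually_atTop.mp hinf
  obtain ⟨a, ha, hab⟩ := (mem_nhdsGT_iff_exists_Ioo_subset).mp hhor
  have ha : rp < a := ha
  have hcont : ContinuousOn rstar (Set.Icc a b) := by
    have : rstar = fun r => r + A * Real.log ((r - rp)/M) - B * Real.log ((r - rm)/M) + Cstar :=
      funext hrstar
    rw [this]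
    intro r hr
    have hr1 := hr.1
    have h0 : (r - rp)/M ≠ 0 := (div_pos (by linarith) hM).ne'
    have h1 : (r - rm)/M ≠ 0 := (div_pos (by linarith) hM).ne'
    apply ContinuousAt.continuousWithinAt
    fun_prop (disch := assumption)
  obtain ⟨C, hC⟩ := isCompact_Icc.exists_bound_of_continuousOn hcont
  refine ⟨|C| + 1, by positivity, fun r hr hρ => key r hr ?_⟩
  by_cases h1 : r < a
  · exact hab ⟨hr, h1⟩
  by_cases h2 : b ≤ r
  · exact hb r h2
  exfalso
  have := hC r ⟨not_lt.mp h1, (not_le.mp h2).le⟩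
  rw [Real.norm_eq_abs] at this
  linarith [le_abs_self C]
end

section
/- In the subcritical case the trapping term for the angular potential is negative far from the photon sphere: there exists ρ₀ > 0 such that for every r > r₊ with |r⋆(r)| > ρ₀, one has 2V_L(r) + r⋆(r)·F(r)·(dV_L/dr)(r) < 0. -/
/-- Subcritical Reissner–Nordström: the trapping term for the angular potential
`V_L = F/r²` is negative far from the photon sphere: there is `ρ₀ > 0` so that
`2V_L + r⋆·F·(dV_L/dr) < 0` whenever `r > r₊` and `|r⋆(r)| > ρ₀`. -/
theorem stmt11 (M Q : ℝ) (hM : 0 < M) (hQ : Q^2 < M^2) (Cstar : ℝ)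
    (rp rm : ℝ) (hrp : rp = M + Real.sqrt (M^2 - Q^2)) (hrm : rm = M - Real.sqrt (M^2 - Q^2))
    (F VL rstar dVLdr : ℝ → ℝ)
    (hF : ∀ r, F r = 1 - 2*M/r + Q^2/r^2)
    (hVL : ∀ r, VL r = F r / r^2)
    (hrstar : ∀ r, rstar r = r + rp^2/(rp - rm) * Real.log ((r - rp)/M)
        - rm^2/(rp - rm) * Real.log ((r - rm)/M) + Cstar)
    (hdVL : ∀ r, dVLdr r = -2/r^5 * (r^2 - 3*M*r + 2*Q^2)) :
    ∃ ρ₀ > 0, ∀ r, rp < r → ρ₀ < |rstar r| →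
      2 * VL r + rstar r * F r * dVLdr r < 0 := by
  have hs : 0 < Real.sqrt (M^2 - Q^2) := Real.sqrt_pos.mpr (by linarith)
  have hs2 : Real.sqrt (M^2 - Q^2) ^ 2 = M^2 - Q^2 := Real.sq_sqrt (by linarith)
  set s := Real.sqrt (M^2 - Q^2) with hsdef
  have hsM : s ≤ M := by nlinarith [sq_nonneg Q]
  have hrp0 : 0 < rp := by linarith
  have hrm0 : 0 ≤ rm := by linarith
  have hd : 0 < rp - rm := by linarith
  obtain ⟨a, ha⟩ : ∃ a, a = rp^2/(rp - rm) := ⟨_, rfl⟩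
  obtain ⟨b, hb⟩ : ∃ b, b = rm^2/(rp - rm) := ⟨_, rfl⟩
  have ha0 : 0 < a := by rw [ha]; positivity
  have hb0 : 0 ≤ b := by rw [hb]; positivity
  have hab : a - b = 2 * M := by
    rw [ha, hb, ← sub_div, div_eq_iff hd.ne', hrp, hrm]; ring
  rw [← ha, ← hb] at hrstar
  -- reduction to a polynomial inequality
  have key : ∀ r, rp < r → r^3 < rstar r * (r^2 - 3*M*r + 2*Q^2) →
      2 * VL r + rstar r * F r * dVLdr r < 0 := by
    intro r hr h
    have hr0 : 0 < r := by linarith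
    have hFpos : 0 < F r := by
      have : F r = (r - rp) * (r - rm) / r^2 := by
        rw [hF, hrp, hrm]; field_simp; nlinarith
      rw [this]
      have h1 : 0 < r - rp := by linarith
      have h2 : 0 < r - rm := by linarith
      positivity
    have : 2 * VL r + rstar r * F r * dVLdr r
        = -(2 * F r / r^5 * (rstar r * (r^2 - 3*M*r + 2*Q^2) - r^3)) := by
      rw [hVL, hdVL]; field_simp; ring
    rw [this]
    have h3 : 0 < rstar r * (r^2 - 3*M*r + 2*Q^2) - r^3 := by linarith
    have : 0 < 2 * F r / r^5 * (rstar r * (r^2 - 3*M*r + 2*Q^2) - r^3) := by positivity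
    linarith
  -- near infinity
  have hinf : ∀ᶠ r in Filter.atTop, r^3 < rstar r * (r^2 - 3*M*r + 2*Q^2) := by
    have hlog : Filter.Tendsto (fun r : ℝ => Real.log (r / M)) Filter.atTop Filter.atTop :=
      Real.tendsto_log_atTop.comp (Filter.tendsto_id.atTop_div_const hM)
    filter_upwards [hlog.eventually_ge_atTop ((4*M + a * Real.log 2 - Cstar) / (2*M)),
      Filter.eventually_gt_atTop (2*rp), Filter.eventually_gt_atTop (12*M)] with r h1 h2 h3
    have hr0 : 0 < r := by linarith
    rw [div_le_iff₀ (by positivity)] at h1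
    have e1 : Real.log (r / M) - Real.log 2 ≤ Real.log ((r - rp)/M) := by
      rw [← Real.log_div (by positivity) (by norm_num)]
      apply Real.log_le_log (by positivity)
      rw [div_right_comm]
      gcongr
      linarith
    have e2 : Real.log ((r - rm)/M) ≤ Real.log (r/M) := by
      have : 0 < r - rm := by linarith
      apply Real.log_le_log (by positivity)
      gcongr
      linarith
    have e3 := mul_le_mul_of_nonneg_left e1 ha0.le
    have e4 := mul_le_mul_of_nonneg_left e2 hb0
    have e5 : a = 2*M + b := by linarith
    have e6 : r + 4*M ≤ rstar r := by
      rw [hrstar]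
      have : a * Real.log (r/M) = 2*M*Real.log (r/M) + b * Real.log (r/M) := by
        rw [e5]; ring
      nlinarith
    have hP : 0 < r^2 - 3*M*r + 2*Q^2 := by nlinarith [sq_nonneg Q, mul_pos hM hr0]
    have e7 := mul_le_mul_of_nonneg_right e6 hP.le
    have e8 : 0 < M * r * (r - 12*M) := by
      have : 0 < r - 12*M := by linarith
      positivity
    have e9 : 0 ≤ Q^2 * r := by positivity
    have e10 : 0 ≤ M * Q^2 := by positivity
    nlinarith
  -- near the horizon
  have hhor : ∀ᶠ r in nhdsWithin rp (Set.Ioi rp),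
      r^3 < rstar r * (r^2 - 3*M*r + 2*Q^2) := by
    have hP : Filter.Tendsto (fun r : ℝ => r^2 - 3*M*r + 2*Q^2) (nhdsWithin rp (Set.Ioi rp))
        (nhds (rp^2 - 3*M*rp + 2*Q^2)) := by
      apply Filter.Tendsto.mono_left _ nhdsWithin_le_nhds
      apply Continuous.tendsto
      fun_prop
    have hPneg : rp^2 - 3*M*rp + 2*Q^2 < 0 := by
      rw [hrp]; nlinarith
    have hl : Filter.Tendsto (fun r : ℝ => (r - rp)/M) (nhdsWithin rp (Set.Ioi rp))
        (nhdsWithin 0 (Set.Ioi 0)) := by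
      apply tendsto_nhdsWithin_of_tendsto_nhds_of_eventually_within
      · apply Filter.Tendsto.mono_left _ nhdsWithin_le_nhds
        have : Continuous (fun r : ℝ => (r - rp)/M) := by fun_prop
        simpa using this.tendsto rp
      · filter_upwards [self_mem_nhdsWithin] with r hr
        exact div_pos (sub_pos.mpr hr) hM
    have hl2 := (Real.tendsto_log_nhdsGT_zero.comp hl).const_mul_atBot ha0
    have hc : Filter.Tendsto (fun r : ℝ => r - b * Real.log ((r - rm)/M) + Cstar)
        (nhdsWithin rp (Set.Ioi rp)) (nhds (rp - b * Real.log ((rp - rm)/M) + Cstar)) := by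
      apply Filter.Tendsto.mono_left _ nhdsWithin_le_nhds
      have : ContinuousAt (fun r : ℝ => r - b * Real.log ((r - rm)/M) + Cstar) rp := by
        have : (rp - rm)/M ≠ 0 := by positivity
        fun_prop (disch := assumption)
      exact this
    have hrs : Filter.Tendsto rstar (nhdsWithin rp (Set.Ioi rp)) Filter.atBot := by
      refine (hl2.atBot_add hc).congr ?_
      intro r
      rw [hrstar]; simp only [Function.comp]; ring
    have hprod := hrs.atBot_mul_neg hPneg hP
    have hcube : Filter.Tendsto (fun r : ℝ => r^3) (nhdsWithin rp (Set.Ioi rp))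
        (nhds (rp^3)) := by
      apply Filter.Tendsto.mono_left _ nhdsWithin_le_nhds
      apply Continuous.tendsto
      fun_prop
    filter_upwards [hprod.eventually_gt_atTop (rp^3+1),
      hcube.eventually_lt_const (lt_add_one _)] with r h1 h2
    linarith
  obtain ⟨R, hR⟩ := Filter.eventually_atTop.mp hinf
  obtain ⟨u, hu, hu2⟩ := mem_nhdsGT_iff_exists_Ioo_subset.mp hhor
  have hu' : rp < u := hu
  have hcont : ContinuousOn rstar (Set.Icc u R) := by
    have : rstar = fun r => r + a * Real.log ((r - rp)/M) - b * Real.log ((r - rm)/M) + Cstar :=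
      funext hrstar
    rw [this]
    intro r hr
    have h1 : (r - rp)/M ≠ 0 := (div_pos (by linarith [hr.1]) hM).ne'
    have h2 : (r - rm)/M ≠ 0 := (div_pos (by linarith [hr.1]) hM).ne'
    apply ContinuousAt.continuousWithinAt
    fun_prop (disch := assumption)
  obtain ⟨B, hB⟩ := isCompact_Icc.exists_bound_of_continuousOn hcont
  refine ⟨|B| + 1, by positivity, fun r hr hbig => key r hr ?_⟩
  by_cases h1 : r < u
  · exact hu2 ⟨hr, h1⟩
  by_cases h2 : R ≤ r
  · exact hR r h2
  exfalso
  have := hB r ⟨not_lt.mp h1, (not_le.mp h2).le⟩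
  rw [Real.norm_eq_abs] at this
  linarith [le_abs_self B]
end

section
/- In the critical case, the rescaled trapping term for the potential has limit −M at the horizon: (r⁴ / (2F(r)(r − M)))·(2V(r) + r⋆(r)·F(r)·(dV/dr)(r)) → −M as r → M from the right. -/
open Filter

/-- Critical (extremal) Reissner–Nordström: the rescaled trapping term for the
potential has limit `−M` at the horizon:
`(r⁴/(2F(r)(r−M)))·(2V(r) + r⋆(r)·F(r)·(dV/dr)(r)) → −M` as `r → M⁺`. -/
theorem stmt12 (M : ℝ) (hM : 0 < M) (Cstar : ℝ)
    (F V rstar PM dVdr : ℝ → ℝ)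
    (hF : ∀ r, F r = (1 - M/r)^2)
    (hV : ∀ r, V r = r⁻¹ * F r * (2*M/r^2 - 2*M^2/r^3))
    (hrstar : ∀ r, rstar r = r + 2*M*Real.log ((r - M)/M) - M^2/(r - M) + Cstar)
    (hPM : ∀ r, PM r = 3*M*(r - M)^2*(r - 2*M))
    (hdV : ∀ r, dVdr r = -2/r^7 * PM r) :
    Tendsto (fun r => (r^4 / (2 * F r * (r - M))) * (2 * V r + rstar r * F r * dVdr r))
      (nhdsWithin M (Set.Ioi M)) (nhds (-M)) := by
  have hc : ContinuousAt (fun r : ℝ => 2*M - 3*M*(r - 2*M)/r^3 *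
      ((r - M)*(r + Cstar) + 2*M*M*(((r - M)/M) * Real.log ((r - M)/M)) - M^2)) M := by
    have h1 : Continuous (fun r : ℝ => ((r - M)/M) * Real.log ((r - M)/M)) :=
      Real.continuous_mul_log.comp (by fun_prop : Continuous fun r : ℝ => (r - M)/M)
    have h2 : ContinuousAt (fun r : ℝ => 3*M*(r - 2*M)/r^3) M :=
      ContinuousAt.div (by fun_prop) (by fun_prop) (by positivity)
    have h3 : Continuous (fun r : ℝ => (r - M)*(r + Cstar) +
        2*M*M*(((r - M)/M) * Real.log ((r - M)/M)) - M^2) :=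
      ((by fun_prop : Continuous fun r : ℝ => (r - M)*(r + Cstar)).add
        (continuous_const.mul h1)).sub continuous_const
    exact continuousAt_const.sub (h2.mul h3.continuousAt)
  have ht := hc.tendsto.mono_left (nhdsWithin_le_nhds (s := Set.Ioi M))
  have hv : 2*M - 3*M*(M - 2*M)/M^3 *
      ((M - M)*(M + Cstar) + 2*M*M*(((M - M)/M) * Real.log ((M - M)/M)) - M^2) = -M := by
    rw [sub_self, zero_div, Real.log_zero]
    field_simp
    ring
  simp only [hv] at ht
  refine ht.congr' ?_
  filter_upwards [self_mem_nhdsWithin] with r hr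
  have hr' : M < r := hr
  have hrM : r - M ≠ 0 := (sub_pos.mpr hr').ne'
  have hr0 : r ≠ 0 := (hM.trans hr').ne'
  have hF0 : F r ≠ 0 := by
    rw [hF]
    have : 1 - M/r = (r - M)/r := by field_simp
    rw [this]
    positivity
  rw [hV, hdV, hPM, hrstar]
  generalize Real.log ((r - M)/M) = L
  generalize F r = f at hF0
  field_simp
  ring
end

section
/- For M > 0 and Q ∈ ℝ with Q² ≤ M², the function I(r) = 3Mr − 4(Q² + 2M²) + 15MQ²/r − 6Q⁴/r² is strictly increasing on [2M, ∞). -/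
/-- For `M > 0`, `Q² ≤ M²`, the function
`I(r) = 3Mr − 4(Q²+2M²) + 15MQ²/r − 6Q⁴/r²` is strictly increasing on `[2M, ∞)`. -/
theorem stmt13 (M Q : ℝ) (hM : 0 < M) (hQ : Q^2 ≤ M^2)
    (I : ℝ → ℝ)
    (hI : ∀ r, I r = 3*M*r - 4*(Q^2 + 2*M^2) + 15*M*Q^2/r - 6*Q^4/r^2) :
    StrictMonoOn I (Set.Ici (2*M)) := by
  intro a ha b hb hab
  rw [Set.mem_Ici] at ha hb
  have ha0 : 0 < a := by linarith
  have hb0 : 0 < b := by linarith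
  have hp : 0 < a * b := mul_pos ha0 hb0
  have key : 0 < 3*M*(a*b)^2 - 15*M*Q^2*(a*b) + 6*Q^4*(a+b) := by
    have h1 : 0 < 3*(a*b)^2 - 15*Q^2*(a*b) + 24*Q^4 := by
      nlinarith [sq_nonneg (5*(a*b) - 16*Q^2), pow_pos hp 2]
    have h2 : 0 ≤ Q^4 * (a + b - 4*M) :=
      mul_nonneg (by positivity) (by linarith)
    nlinarith [mul_pos hM h1]
  have e : I b - I a =
      (b - a) * (3*M*(a*b)^2 - 15*M*Q^2*(a*b) + 6*Q^4*(a+b)) / (a*b)^2 := by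
    rw [hI, hI]
    field_simp
    ring
  have : 0 < I b - I a := by
    rw [e]
    exact div_pos (mul_pos (sub_pos.2 hab) key) (pow_pos hp 2)
  linarith
end

section
/- For M > 0 and Q ∈ ℝ with Q² < M², the cubic P_Q is strictly negative on the interval from the outer horizon to 2M: P_Q(r) < 0 for every r ∈ [r₊, 2M], where r₊ = M + √(M² − Q²). -/
/-- Subcritical case: the cubic `P_Q` is strictly negative on `[r₊, 2M]`. -/
theorem stmt14 (M Q : ℝ) (hM : 0 < M) (hQ : Q^2 < M^2)
    (rp : ℝ) (hrp : rp = M + Real.sqrt (M^2 - Q^2))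
    (PQ : ℝ → ℝ)
    (hPQ : ∀ r, PQ r = 3*M*r^3 - 4*(Q^2 + 2*M^2)*r^2 + 15*M*Q^2*r - 6*Q^4) :
    ∀ r ∈ Set.Icc rp (2*M), PQ r < 0 := by
  rintro r ⟨h1, h2⟩
  rw [hPQ, show Q^4 = (Q^2)^2 by ring]
  have hs : 0 < Real.sqrt (M^2 - Q^2) := Real.sqrt_pos.mpr (by linarith)
  have hs2 := Real.sq_sqrt (show 0 ≤ M^2 - Q^2 by linarith)
  have hr : M < r := by linarith
  have hq : 2*M*r - r^2 ≤ Q^2 := by nlinarith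
  generalize Q^2 = q at *
  have hr0 : 0 < r := by linarith
  rcases le_total r (9/8*M) with h | h
  · have e : 3*M*r^3 - 4*(q + 2*M^2)*r^2 + 15*M*q*r - 6*q^2 =
        -(2*(r*(r-M))^2) + (q-(2*M*r-r^2))*(15*M*r-4*r^2-6*q-6*(2*M*r-r^2)) := by ring
    have a : 0 < (r*(r-M))^2 := by
      have : 0 < r*(r-M) := mul_pos hr0 (by linarith)
      positivity
    have b : 15*M*r-4*r^2-6*q-6*(2*M*r-r^2) ≤ 0 := by nlinarith
    have c := mul_nonpos_of_nonneg_of_nonpos (sub_nonneg.mpr hq) b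
    rw [e]; linarith
  · rcases le_total r (19/10*M) with h' | h'
    · have a : 33*M^2-48*M*r+16*r^2 < 0 := by
        nlinarith [mul_nonneg (sub_nonneg.mpr h) (sub_nonneg.mpr h')]
      have b : r^2*(33*M^2-48*M*r+16*r^2) < 0 := mul_neg_of_pos_of_neg (by positivity) a
      nlinarith [sq_nonneg (12*q-(15*M*r-4*r^2))]
    · have e : 3*M*r^3 - 4*(q + 2*M^2)*r^2 + 15*M*q*r - 6*q^2 =
        -(3*M*(r-M)^2*(2*M-r)) - (M^2-q)*(15*M*r-4*r^2-6*q-6*M^2) := by ring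
      have a : 0 ≤ 3*M*(r-M)^2*(2*M-r) := mul_nonneg (by positivity) (by linarith)
      have b : 0 < 15*M*r-4*r^2-6*q-6*M^2 := by
        nlinarith [mul_nonneg (sub_nonneg.mpr h2) (sub_nonneg.mpr h')]
      have c := mul_pos (sub_pos.mpr hQ) b
      rw [e]; linarith
end

section
/- Fix M > 0, Q ∈ ℝ with Q² < M², and c ≥ 0 (for the wave equation on the l-th spherical harmonic one takes c = l(l+1)). Let V_c(r) = V(r) + c·V_L(r) on (r₊, ∞). Then V_c has a unique critical point in the exterior region, and it is a maximum: there is a unique r₀ ∈ (r₊, ∞) with (dV_c/dr)(r₀) = 0 (equivalently, a unique root of P_Q + c·P_L in (r₊, ∞)); moreover V_c is strictly increasing on (r₊, r₀] and strictly decreasing on [r₀, ∞). -/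
/-- A quartic whose coefficients have a single sign change: the positive sign propagates. -/
theorem quartic_step (A B C D E x y : ℝ) (hA : 0 < A) (hD : 0 < D) (hE : 0 ≤ E)
    (hBC : B ≤ 0 ∨ 0 ≤ C) (hx : 0 < x) (hxy : x < y)
    (h : 0 ≤ -A + B*x + C*x^2 + D*x^3 + E*x^4) :
    0 < -A + B*y + C*y^2 + D*y^3 + E*y^4 := by
  have hy : 0 < y := hx.trans hxy
  have hd : 0 < y - x := sub_pos.2 hxy
  rcases hBC with hB | hC
  · have key : x^2 * (-A + B*y + C*y^2 + D*y^3 + E*y^4)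
        = y^2 * (-A + B*x + C*x^2 + D*x^3 + E*x^4)
          + (A*((y-x)*(y+x)) + (-B)*(x*y*(y-x)) + D*(x^2*y^2*(y-x))
            + E*(x^2*y^2*((y-x)*(y+x)))) := by ring
    have hB' : 0 ≤ -B := by linarith
    have : 0 < x^2 * (-A + B*y + C*y^2 + D*y^3 + E*y^4) := by
      rw [key]; positivity
    exact pos_of_mul_pos_right this (by positivity)
  · have key : x * (-A + B*y + C*y^2 + D*y^3 + E*y^4)
        = y * (-A + B*x + C*x^2 + D*x^3 + E*x^4)
          + (A*(y-x) + C*(x*y*(y-x)) + D*(x*y*((y-x)*(y+x)))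
            + E*(x*y*((y-x)*(y^2+x*y+x^2)))) := by ring
    have : 0 < x * (-A + B*y + C*y^2 + D*y^3 + E*y^4) := by
      rw [key]; positivity
    exact pos_of_mul_pos_right this hx.le

theorem quartic_root (A B C D E : ℝ) (hA : 0 < A) (hD : 0 < D) (hE : 0 ≤ E) :
    ∃ x, 0 < x ∧ -A + B*x + C*x^2 + D*x^3 + E*x^4 = 0 := by
  set f : ℝ → ℝ := fun x => -A + B*x + C*x^2 + D*x^3 + E*x^4 with hf
  set K := (A + |B| + |C|)/D with hK
  have hKD : K * D = A + |B| + |C| := by rw [hK]; field_simp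
  have hK0 : 0 < K := by rw [hK]; positivity
  set X := 1 + K with hX
  have hX1 : 1 < X := by linarith
  have hX0 : 0 < X := by linarith
  have hpos : 0 ≤ f X := by
    have h1 : D * X = D + (A + |B| + |C|) := by rw [hX]; linarith
    have h3 : D*X^3 = (D + (A + |B| + |C|)) * X^2 := by rw [← h1]; ring
    have hXX : X ≤ X^2 := by nlinarith
    have hX2 : 1 ≤ X^2 := by nlinarith
    have a1 : 0 ≤ A * (X^2 - 1) := mul_nonneg hA.le (by linarith)
    have a2 : 0 ≤ |B| * (X^2 - X) := mul_nonneg (abs_nonneg _) (by linarith)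
    have a3 : 0 ≤ (|B| + B) * X := mul_nonneg (by linarith [neg_abs_le B]) hX0.le
    have a4 : 0 ≤ (|C| + C) * X^2 := mul_nonneg (by linarith [neg_abs_le C]) (by positivity)
    have a5 : 0 ≤ E * X^4 := by positivity
    have a6 : 0 ≤ D * X^2 := by positivity
    simp only [hf]
    rw [h3]
    nlinarith
  have hc : ContinuousOn f (Set.Icc 0 X) := by
    apply Continuous.continuousOn; simp only [hf]; fun_prop
  have h0 : f 0 = -A := by simp [hf]
  obtain ⟨x, hx, hfx⟩ := intermediate_value_Icc hX0.le hc
    (show (0:ℝ) ∈ Set.Icc (f 0) (f X) from ⟨by rw [h0]; linarith, hpos⟩)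
  refine ⟨x, lt_of_le_of_ne hx.1 ?_, hfx⟩
  rintro rfl
  rw [h0] at hfx; linarith

/-- Subcritical Reissner–Nordström, effective potential `V_c = V + c·V_L`, `c ≥ 0`:
`V_c` has a unique critical point `r₀` in the exterior region `(r₊, ∞)`, which is a
maximum: `V_c` is strictly increasing on `(r₊, r₀]` and strictly decreasing on `[r₀, ∞)`. -/
theorem stmt15 (M Q c : ℝ) (hM : 0 < M) (hQ : Q^2 < M^2) (hc : 0 ≤ c)
    (rp : ℝ) (hrp : rp = M + Real.sqrt (M^2 - Q^2))
    (F V VL Vc : ℝ → ℝ)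
    (hF : ∀ r, F r = 1 - 2*M/r + Q^2/r^2)
    (hV : ∀ r, V r = r⁻¹ * F r * (2*M/r^2 - 2*Q^2/r^3))
    (hVL : ∀ r, VL r = F r / r^2)
    (hVc : ∀ r, Vc r = V r + c * VL r) :
    ∃ r₀ ∈ Set.Ioi rp,
      deriv Vc r₀ = 0 ∧
      (∀ r ∈ Set.Ioi rp, deriv Vc r = 0 → r = r₀) ∧
      StrictMonoOn Vc (Set.Ioc rp r₀) ∧
      StrictAntiOn Vc (Set.Ici r₀) := by
  set s := Real.sqrt (M^2 - Q^2) with hs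
  have hs0 : 0 < s := Real.sqrt_pos.2 (by linarith)
  have hs2 : s^2 = M^2 - Q^2 := Real.sq_sqrt (by linarith)
  have hQ2 : Q^2 = M^2 - s^2 := by linarith
  clear_value s
  have ha : 0 < rp := by rw [hrp]; positivity
  obtain ⟨A, hAd⟩ : ∃ A, A = 2*rp^2*s^2 + c*s*rp^3 := ⟨_, rfl⟩
  obtain ⟨B, hBd⟩ : ∃ B, B = rp*(8*s^2 - 6*s*M) - c*rp^2*M := ⟨_, rfl⟩
  obtain ⟨C, hCd⟩ : ∃ C, C = 4*s^2 + 9*s*M - 3*M^2 + c*rp*(4*s - M) := ⟨_, rfl⟩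
  obtain ⟨D, hDd⟩ : ∃ D, D = 3*M + c*(4*s+M) := ⟨_, rfl⟩
  have hA : 0 < A := by rw [hAd]; positivity
  have hD : 0 < D := by rw [hDd]; positivity
  have hBC : B ≤ 0 ∨ 0 ≤ C := by
    rcases le_total (4*s) (3*M) with h | h
    · left
      have h1 : 0 ≤ rp * (2*s*(3*M-4*s)) :=
        mul_nonneg ha.le (mul_nonneg (by positivity) (by linarith))
      have h2 : 0 ≤ c*rp^2*M := by positivity
      rw [hBd]; nlinarith
    · right
      have h1 : 0 ≤ c*rp*(4*s-M) := mul_nonneg (by positivity) (by linarith)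
      rw [hCd]; nlinarith
  have hder : ∀ r, 0 < r → HasDerivAt Vc
      (-(2 / r^7) * (-A + B*(r-rp) + C*(r-rp)^2 + D*(r-rp)^3 + c*(r-rp)^4)) r := by
    intro r hr
    have hr0 : r ≠ 0 := hr.ne'
    have hfun : Vc = fun r => r⁻¹ * (1 - 2*M*r⁻¹ + Q^2*(r⁻¹)^2) * (2*M*(r⁻¹)^2 - 2*Q^2*(r⁻¹)^3)
        + c*((1 - 2*M*r⁻¹ + Q^2*(r⁻¹)^2) * (r⁻¹)^2) := by
      funext t
      rw [hVc, hV, hVL, hF]; simp only [div_eq_mul_inv, inv_pow]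
    have hi := hasDerivAt_inv hr0
    have hFd := ((hi.const_mul (2*M)).const_sub 1).add ((hi.pow 2).const_mul (Q^2))
    have hG := ((hi.pow 2).const_mul (2*M)).sub ((hi.pow 3).const_mul (2*Q^2))
    have hall := ((hi.mul hFd).mul hG).add ((hFd.mul (hi.pow 2)).const_mul c)
    rw [hfun]
    refine HasDerivAt.congr_deriv hall ?_
    simp only [Pi.add_apply, Pi.mul_apply, Pi.sub_apply, Pi.pow_apply]
    rw [hAd, hBd, hCd, hDd, hrp, hQ2]
    push_cast
    field_simp
    ring
  obtain ⟨x, hx, hx0⟩ := quartic_root A B C D c hA hD hc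
  have hpos : ∀ r, rp + x < r →
      0 < -A + B*(r-rp) + C*(r-rp)^2 + D*(r-rp)^3 + c*(r-rp)^4 := fun r hr =>
    quartic_step A B C D c x (r-rp) hA hD hc hBC hx (by linarith) hx0.ge
  have hneg : ∀ r, rp < r → r < rp + x →
      -A + B*(r-rp) + C*(r-rp)^2 + D*(r-rp)^3 + c*(r-rp)^4 < 0 := by
    intro r h1 h2
    by_contra h
    have := quartic_step A B C D c (r-rp) x hA hD hc hBC (by linarith) (by linarith) (not_lt.1 h)
    linarith
  have dneg : ∀ r, rp + x < r → deriv Vc r < 0 := by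
    intro r hr
    have hr0 : 0 < r := by linarith
    rw [(hder r hr0).deriv]
    exact mul_neg_of_neg_of_pos (neg_neg_of_pos (by positivity)) (hpos r hr)
  have dpos : ∀ r, rp < r → r < rp + x → 0 < deriv Vc r := by
    intro r h1 h2
    have hr0 : 0 < r := by linarith
    rw [(hder r hr0).deriv]
    exact mul_pos_of_neg_of_neg (neg_neg_of_pos (by positivity)) (hneg r h1 h2)
  refine ⟨rp + x, by simpa using hx, ?_, ?_, ?_, ?_⟩
  · rw [(hder (rp+x) (by linarith)).deriv, add_sub_cancel_left, hx0, mul_zero]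
  · intro r hr h
    rcases lt_trichotomy r (rp+x) with h1 | h1 | h1
    · exact absurd h (dpos r hr h1).ne'
    · exact h1
    · exact absurd h (dneg r h1).ne
  · refine strictMonoOn_of_deriv_pos (convex_Ioc _ _) ?_ ?_
    · intro r hr
      exact (hder r (ha.trans hr.1)).continuousAt.continuousWithinAt
    · intro r hr
      rw [interior_Ioc] at hr
      exact dpos r hr.1 hr.2
  · refine strictAntiOn_of_deriv_neg (convex_Ici _) ?_ ?_
    · intro r hr
      have : rp + x ≤ r := hr
      exact (hder r (by linarith)).continuousAt.continuousWithinAt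
    · intro r hr
      rw [interior_Ici] at hr
      exact dneg r hr
end

section
/- Fix M > 0 and Q ∈ ℝ with Q² < M², and let α = (3M + √(9M² − 8Q²))/2 be the photon-sphere radius, the unique critical point of the angular potential V_L in (r₊, ∞). Then the critical points of V + c·V_L converge to α as c → ∞: for every δ > 0 there exists c₀ ≥ 0 such that for all c ≥ c₀, every r ∈ (r₊, ∞) with d(V + c·V_L)/dr (r) = 0 satisfies |r − α| < δ. -/
/-- Subcritical Reissner–Nordström: the critical points of `V + c·V_L` in the exterior
region converge to the photon-sphere radius `α = (3M + √(9M² − 8Q²))/2` as `c → ∞`. -/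
theorem stmt16 (M Q : ℝ) (hM : 0 < M) (hQ : Q^2 < M^2)
    (rp α : ℝ) (hrp : rp = M + Real.sqrt (M^2 - Q^2))
    (hα : α = (3*M + Real.sqrt (9*M^2 - 8*Q^2))/2)
    (F V VL : ℝ → ℝ)
    (hF : ∀ r, F r = 1 - 2*M/r + Q^2/r^2)
    (hV : ∀ r, V r = r⁻¹ * F r * (2*M/r^2 - 2*Q^2/r^3))
    (hVL : ∀ r, VL r = F r / r^2) :
    ∀ δ > 0, ∃ c₀ : ℝ, 0 ≤ c₀ ∧ ∀ c, c₀ ≤ c → ∀ r ∈ Set.Ioi rp,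
      deriv (fun x => V x + c * VL x) r = 0 → |r - α| < δ := by
  intro δ hδ
  have hMQ : 0 < M^2 - Q^2 := by linarith
  obtain ⟨k, hk⟩ : ∃ k, k = Real.sqrt (M^2 - Q^2) := ⟨_, rfl⟩
  have hkpos : 0 < k := by rw [hk]; exact Real.sqrt_pos.mpr hMQ
  obtain ⟨s, hs⟩ : ∃ s, s = Real.sqrt (9*M^2 - 8*Q^2) := ⟨_, rfl⟩
  have hs2 : s^2 = 9*M^2 - 8*Q^2 := by
    rw [hs]; exact Real.sq_sqrt (by nlinarith [sq_nonneg Q])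
  have hsM : M < s := by
    rw [hs]; apply Real.lt_sqrt_of_sq_lt; linarith
  rw [← hk] at hrp
  rw [← hs] at hα
  refine ⟨36*M*(M+k)/(k*δ) + 1, by positivity, ?_⟩
  intro c hc r hr hd
  have hr : M + k < r := by rw [← hrp]; exact hr
  have hrM : M < r := by linarith
  have hr0 : 0 < r := by linarith
  have hne : r ≠ 0 := hr0.ne'
  have hfun : (fun x => V x + c * VL x) = fun x => (x⁻¹ * (1 - 2*M/x + Q^2/x^2) * (2*M/x^2 - 2*Q^2/x^3) + c * ((1 - 2*M/x + Q^2/x^2) / x^2)) := by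
    funext x; rw [hV, hVL, hF]
  have hid := hasDerivAt_id' r
  have hFd : HasDerivAt (fun x : ℝ => 1 - 2*M/x + Q^2/x^2) _ r :=
    ((hasDerivAt_const r (1:ℝ)).sub ((hasDerivAt_const r (2*M)).div hid hne)).add
      ((hasDerivAt_const r (Q^2)).div (hid.pow 2) (pow_ne_zero 2 hne))
  have hGd : HasDerivAt (fun x : ℝ => 2*M/x^2 - 2*Q^2/x^3) _ r :=
    ((hasDerivAt_const r (2*M)).div (hid.pow 2) (pow_ne_zero 2 hne)).sub
      ((hasDerivAt_const r (2*Q^2)).div (hid.pow 3) (pow_ne_zero 3 hne))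
  have hT : HasDerivAt (fun x : ℝ => (x⁻¹ * (1 - 2*M/x + Q^2/x^2) * (2*M/x^2 - 2*Q^2/x^3) + c * ((1 - 2*M/x + Q^2/x^2) / x^2))) _ r :=
    (((hid.inv hne).mul hFd).mul hGd).add
      ((hFd.div (hid.pow 2) (pow_ne_zero 2 hne)).const_mul c)
  have hT2 : HasDerivAt (fun x : ℝ => (x⁻¹ * (1 - 2*M/x + Q^2/x^2) * (2*M/x^2 - 2*Q^2/x^3) + c * ((1 - 2*M/x + Q^2/x^2) / x^2)))
      (-2 / r^7 * ((3*M*r^3 - 4*(Q^2+2*M^2)*r^2 + 15*M*Q^2*r - 6*Q^4) + c*(r^4 - 3*M*r^3 + 2*Q^2*r^2))) r := by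
    refine hT.congr_deriv ?_
    simp
    field_simp
    ring
  rw [hfun, hT2.deriv] at hd
  have hz : (3*M*r^3 - 4*(Q^2+2*M^2)*r^2 + 15*M*Q^2*r - 6*Q^4) + c*(r^4 - 3*M*r^3 + 2*Q^2*r^2) = 0 := by
    rcases mul_eq_zero.mp hd with h | h
    · exact absurd h (div_ne_zero (by norm_num) (pow_ne_zero 7 hne))
    · exact h
  by_contra hcon
  push Not at hcon
  have hβ : r - M ≤ r - (3*M - s)/2 := by linarith
  have hfac : r^4 - 3*M*r^3 + 2*Q^2*r^2 = r^2 * ((r - α) * (r - (3*M - s)/2)) := by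
    rw [hα]
    linear_combination (r^2/4) * hs2
  have hc1 : 36*M*(M+k)/(k*δ) < c := by linarith
  rw [div_lt_iff₀ (by positivity)] at hc1
  have hc0 : 0 < c := lt_of_lt_of_le (by positivity) hc
  have hQ2 : Q^2 ≤ M^2 := hQ.le
  have hQ0 : 0 ≤ Q^2 := sq_nonneg Q
  have hQ4 : Q^4 ≤ M^4 := by nlinarith
  have a1 : M^2*r^2 ≤ M*r^3 := by
    have : 0 ≤ M * r^2 * (r - M) := by have : 0 ≤ r - M := by linarith
                                       positivity
    linarith
  have a2 : M^3*r ≤ M^2*r^2 := by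
    have : 0 ≤ M^2 * r * (r - M) := by have : 0 ≤ r - M := by linarith
                                       positivity
    linarith
  have a3 : M^4 ≤ M^3*r := by
    have : 0 ≤ M^3 * (r - M) := by have : 0 ≤ r - M := by linarith
                                   positivity
    linarith
  have b1 : Q^2*r^2 ≤ M^2*r^2 := by gcongr
  have b2 : M*Q^2*r ≤ M^3*r := by
    calc M*Q^2*r ≤ M*M^2*r := by gcongr
      _ = M^3*r := by ring
  have b3 : 0 ≤ M*Q^2*r := by positivity
  have b4 : 0 ≤ Q^2*r^2 := by positivity
  have b5 : 0 ≤ Q^4 := by positivity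
  have b6 : 0 ≤ M^4 := by positivity
  have hPQ : |3*M*r^3 - 4*(Q^2+2*M^2)*r^2 + 15*M*Q^2*r - 6*Q^4| ≤ 36*M*r^3 := by
    rw [abs_le]; constructor <;> linarith
  have hB : 0 < r - (3*M - s)/2 := by linarith
  have heq : |3*M*r^3 - 4*(Q^2+2*M^2)*r^2 + 15*M*Q^2*r - 6*Q^4| = c * (r^2 * (|r - α| * (r - (3*M - s)/2))) := by
    rw [show 3*M*r^3 - 4*(Q^2+2*M^2)*r^2 + 15*M*Q^2*r - 6*Q^4 = -(c * (r^2 * ((r - α) * (r - (3*M - s)/2)))) by rw [← hfac]; linarith]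
    rw [abs_neg, abs_mul, abs_mul, abs_mul, abs_of_pos hc0, abs_of_pos hB, abs_of_pos (by positivity : 0 < r^2)]
  have hlow : c * (r^2 * (δ * (r - M))) ≤ 36*M*r^3 := by
    refine le_trans ?_ (heq ▸ hPQ)
    have : 0 ≤ r - M := by linarith
    gcongr
  have h1 : c * δ * (r - M) ≤ 36*M*r := by
    have : r^2 * (c * δ * (r - M)) ≤ r^2 * (36*M*r) := by linarith
    exact le_of_mul_le_mul_left this (by positivity)
  have h2 : r * k ≤ (r - M) * (M + k) := by nlinarith
  have hrM0 : 0 < r - M := by linarith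
  have h3 : 36*M*(M+k)*(r-M) < c*(k*δ)*(r-M) := by gcongr
  have h4 : c * δ * (r - M) * k ≤ 36*M*r*k := by gcongr
  have h5 : 36*M*(r*k) ≤ 36*M*((r - M) * (M + k)) := by gcongr
  linarith
end

section
/- For every σ > 1 there is a constant C > 0, depending only on σ, such that for every b > 0 and every continuously differentiable, compactly supported u : ℝ → ℝ, b³·∫ℝ (1 + b|x|)^{−σ−2}·u(x)² dx ≤ C·( b²·u(0)² + b·∫ℝ (1 + b|x|)^{−σ}·u′(x)² dx ). -/
open MeasureTheory

lemma aux_int (b p : ℝ) (hb : 0 < b) (v : ℝ → ℝ) (hv : Continuous v) (hc : HasCompactSupport v) :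
    Integrable (fun x : ℝ => (1 + b*|x|) ^ p * v x) := by
  apply Continuous.integrable_of_hasCompactSupport
  · refine Continuous.mul (Continuous.rpow_const (by fun_prop) ?_) hv
    intro x; left; positivity
  · exact hc.mul_left

lemma aux_half (σ : ℝ) (hσ : 1 < σ) (b : ℝ) (hb : 0 < b) (u : ℝ → ℝ) (hu : ContDiff ℝ 1 u)
    (hc : HasCompactSupport u) :
    b^3 * ∫ x in Set.Ioi (0:ℝ), (1 + b*|x|) ^ (-(σ+2)) * (u x)^2 ≤
      b^2 * (u 0)^2 + b * ∫ x in Set.Ioi (0:ℝ), (1 + b*|x|) ^ (-σ) * (deriv u x)^2 := by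
  have hd : Continuous (deriv u) := hu.continuous_deriv le_rfl
  have huc : Continuous u := hu.continuous
  have c2 : HasCompactSupport (fun x => (u x)^2) := by
    simp only [pow_two]; exact hc.mul_left (f := u)
  have cd : HasCompactSupport (fun x => (deriv u x)^2) := by
    simp only [pow_two]; exact hc.deriv.mul_left (f := deriv u)
  have cm : HasCompactSupport (fun x => u x * deriv u x) := hc.mul_right
  have i1 := (aux_int b (-(σ+2)) hb _ (by fun_prop) c2).integrableOn (s := Set.Ioi 0)
  have i2 := (aux_int b (-(σ)) hb _ (by fun_prop) cd).integrableOn (s := Set.Ioi 0)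
  have i3 := (aux_int b (-(σ+1)) hb _ (by fun_prop) cm).integrableOn (s := Set.Ioi 0)
  have iF : IntegrableOn (fun x : ℝ => (σ+1) * b * ((1 + b*|x|) ^ (-(σ+2)) * (u x)^2)
      - 2 * ((1 + b*|x|) ^ (-(σ+1)) * (u x * deriv u x))) (Set.Ioi 0) :=
    (i1.const_mul _).sub (i3.const_mul _)
  have key : ∫ x in Set.Ioi (0:ℝ), ((σ+1) * b * ((1 + b*|x|) ^ (-(σ+2)) * (u x)^2)
      - 2 * ((1 + b*|x|) ^ (-(σ+1)) * (u x * deriv u x)))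
      = 0 - (-((1 + b*|(0:ℝ)|) ^ (-(σ+1)) * (u 0)^2)) := by
    refine integral_Ioi_of_hasDerivAt_of_tendsto
      (f := fun x => -((1 + b*|x|) ^ (-(σ+1)) * (u x)^2)) ?_ ?_ iF ?_
    · refine Continuous.continuousWithinAt ?_
      refine (Continuous.mul (Continuous.rpow_const (by fun_prop) ?_) (by fun_prop)).neg
      intro x; left; positivity
    · intro x hx
      have hx : 0 < x := hx
      have hw : 0 < 1 + b * x := by positivity
      have h1 : HasDerivAt (fun y : ℝ => 1 + b * y) b x := by
        simpa using ((hasDerivAt_id x).const_mul b).const_add 1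
      have h2 := h1.rpow_const (p := -(σ+1)) (Or.inl hw.ne')
      have h3 : HasDerivAt u (deriv u x) x :=
        ((hu.differentiable one_ne_zero) x).hasDerivAt
      have h4 := (h2.mul (h3.pow 2)).neg
      have h5 := h4.congr_of_eventuallyEq
        (f₁ := fun x : ℝ => -((1 + b*|x|) ^ (-(σ+1)) * (u x)^2)) (by
        filter_upwards [lt_mem_nhds hx] with y hy
        simp [abs_of_pos hy])
      convert h5 using 1
      rw [abs_of_pos hx, show -(σ+1) - 1 = -(σ+2) by ring]
      simp
      ring
    · apply tendsto_const_nhds.congr'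
      have h0 : ∀ᶠ x in Filter.atTop, u x = 0 := by
        have := hasCompactSupport_iff_eventuallyEq.1 hc
        exact (this.filter_mono (by
          rw [Filter.coclosedCompact_eq_cocompact]; exact atTop_le_cocompact))
      filter_upwards [h0] with x hx
      simp [hx]
  have pw : ∫ x in Set.Ioi (0:ℝ), (b * ((1 + b*|x|) ^ (-(σ+2)) * (u x)^2)
        - b⁻¹ * ((1 + b*|x|) ^ (-σ) * (deriv u x)^2)) ≤
      ∫ x in Set.Ioi (0:ℝ), ((σ+1) * b * ((1 + b*|x|) ^ (-(σ+2)) * (u x)^2)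
      - 2 * ((1 + b*|x|) ^ (-(σ+1)) * (u x * deriv u x))) := by
    refine integral_mono ((i1.const_mul _).sub (i2.const_mul _)) iF ?_
    intro x
    have hw : 0 < 1 + b*|x| := by positivity
    have e1 : (1 + b*|x|) ^ (-(σ+1)) = (1 + b*|x|) ^ (-(σ+2)) * (1 + b*|x|) := by
      rw [← Real.rpow_add_one hw.ne']; congr 1; ring
    have e2 : (1 + b*|x|) ^ (-σ) = (1 + b*|x|) ^ (-(σ+2)) * (1 + b*|x|)^2 := by
      rw [← Real.rpow_add_natCast hw.ne']; congr 1; push_cast; ring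
    have hp : 0 < (1 + b*|x|) ^ (-(σ+2)) := Real.rpow_pos_of_pos hw _
    simp only [e1, e2]
    generalize (1 + b*|x|) ^ (-(σ+2)) = P at *
    generalize (1 + b*|x|) = w at *
    rw [← sub_nonneg]
    have : (σ+1) * b * (P * (u x)^2) - 2 * (P * w * (u x * deriv u x))
        - (b * (P * (u x)^2) - b⁻¹ * (P * w^2 * (deriv u x)^2))
        = (σ - 1) * b * P * (u x)^2 + b⁻¹ * P * (b * u x - w * deriv u x)^2 := by
      field_simp
      ring
    rw [this]
    have : 0 < σ - 1 := by linarith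
    positivity
  rw [key, integral_sub (i1.const_mul _) (i2.const_mul _), integral_const_mul,
    integral_const_mul] at pw
  simp at pw
  have := mul_le_mul_of_nonneg_left pw (sq_nonneg b)
  simp only [neg_add_rev] at this ⊢
  generalize (∫ x in Set.Ioi (0:ℝ), (1 + b*|x|) ^ (-2 + -σ) * (u x)^2) = A at *
  generalize (∫ x in Set.Ioi (0:ℝ), (1 + b*|x|) ^ (-σ) * (deriv u x)^2) = B at *
  have e : b^2 * (b⁻¹ * B) = b * B := by field_simp
  nlinarith

/-- Weighted Hardy/trace-type inequality at the core of the Morawetz commutator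
positivity estimate: for `σ > 1` there is `C > 0` (depending only on `σ`) such that
for all `b > 0` and all `C¹` compactly supported `u : ℝ → ℝ`,
`b³ ∫ (1+b|x|)^{−σ−2} u² ≤ C (b² u(0)² + b ∫ (1+b|x|)^{−σ} (u′)²)`. -/
theorem stmt18 (σ : ℝ) (hσ : 1 < σ) :
    ∃ C > 0, ∀ b : ℝ, 0 < b → ∀ u : ℝ → ℝ, ContDiff ℝ 1 u → HasCompactSupport u →
      b^3 * ∫ x : ℝ, (1 + b*|x|) ^ (-(σ+2)) * (u x)^2 ≤
        C * (b^2 * (u 0)^2 + b * ∫ x : ℝ, (1 + b*|x|) ^ (-σ) * (deriv u x)^2) := by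
  refine ⟨2, by norm_num, ?_⟩
  intro b hb u hu hc
  have hd : Continuous (deriv u) := hu.continuous_deriv le_rfl
  have huc : Continuous u := hu.continuous
  have c2 : HasCompactSupport (fun x => (u x)^2) := by
    simp only [pow_two]; exact hc.mul_left (f := u)
  have cd : HasCompactSupport (fun x => (deriv u x)^2) := by
    simp only [pow_two]; exact hc.deriv.mul_left (f := deriv u)
  have i1 := aux_int b (-(σ+2)) hb _ (by fun_prop) c2
  have i2 := aux_int b (-σ) hb _ (by fun_prop) cd
  have p1 := aux_half σ hσ b hb u hu hc
  have p2 := aux_half σ hσ b hb (fun x => u (-x)) (hu.comp contDiff_neg)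
    (hc.comp_homeomorph (Homeomorph.neg ℝ))
  have s1 := integral_comp_neg_Ioi (0:ℝ) (fun x => (1 + b*|x|) ^ (-(σ+2)) * (u x)^2)
  have s2 := integral_comp_neg_Ioi (0:ℝ) (fun x => (1 + b*|x|) ^ (-σ) * (deriv u x)^2)
  have t1 := intervalIntegral.integral_Iic_add_Ioi (b := (0:ℝ)) i1.integrableOn i1.integrableOn
  have t2 := intervalIntegral.integral_Iic_add_Ioi (b := (0:ℝ)) i2.integrableOn i2.integrableOn
  simp only [abs_neg, neg_zero] at s1 s2
  simp only [deriv_comp_neg, neg_sq, neg_zero] at p2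
  rw [s1, s2] at p2
  rw [← t1, ← t2]
  have hJ : 0 ≤ b * (∫ x in Set.Iic (0:ℝ), (1 + b*|x|) ^ (-σ) * (deriv u x)^2) :=
    mul_nonneg hb.le (integral_nonneg fun x => by positivity)
  have hK : 0 ≤ b * (∫ x in Set.Ioi (0:ℝ), (1 + b*|x|) ^ (-σ) * (deriv u x)^2) :=
    mul_nonneg hb.le (integral_nonneg fun x => by positivity)
  linarith
end
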